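/- (Weighted telescoping bound) Let Q ⊆ E be a compact convex set, ψ a differentiable σ-strongly convex prox-function on Q, f : Q → ℝ convex continuous with minimizer x* over Q, and suppose V_ψ(x*, x) ≤ R for all x ∈ Q. Let {γ_k}_{k=1}^N be positive non-increasing, fix m ≥ −1, and set ω_k^{(m)} = γ_k^{−m} if −1 ≤ m ≤ 0 and ω_k^{(m)} = k^{m/2} if m > 0. Let x^1 ∈ Q and x^{k+1} = argmin_{x ∈ Q} { ⟨∇f(x^k), x⟩ + (1/γ_k) V_ψ(x, x^k) } with ∇f(x^k) ∈ ∂f(x^k). Then ∑_{k=1}^N ω_k^{(m)} ( f(x^k) − f(x*) ) ≤ R · ω_N^{(m)}/γ_N + ∑_{k=1}^N (ω_k^{(m)} γ_k / (2σ)) ‖∇f(x^k)‖_*². -/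

import Mathlib

/-- The Bregman divergence `V_ψ(x, y) = ψ(x) − ψ(y) − ⟨∇ψ(y), x − y⟩` associated with a
differentiable function `ψ` with gradient `ψ'`. -/
noncomputable def bregman {E : Type*} [NormedAddCommGroup E] [NormedSpace ℝ E]
    (ψ : E → ℝ) (ψ' : E → E →L[ℝ] ℝ) (x y : E) : ℝ :=
  ψ x - ψ y - ψ' y (x - y)

/-- `g` is a subgradient of `f` at `x` relative to `Q`. -/
def IsSubgradientAt {E : Type*} [NormedAddCommGroup E] [NormedSpace ℝ E]
    (f : E → ℝ) (Q : Set E) (g : E →L[ℝ] ℝ) (x : E) : Prop :=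
  ∀ y ∈ Q, f x + g (y - x) ≤ f y

/-- First-order optimality condition on a convex set. -/
theorem IsMinOn.hasFDerivWithinAt_sub_nonneg
    {E : Type*} [NormedAddCommGroup E] [NormedSpace ℝ E] {Q : Set E} (hQ : Convex ℝ Q)
    {F : E → ℝ} {F' : E →L[ℝ] ℝ} {a u : E} (hmin : IsMinOn F Q a)
    (hF : HasFDerivWithinAt F F' Q a) (ha : a ∈ Q) (hu : u ∈ Q) : 0 ≤ F' (u - a) :=
  hmin.localize.hasFDerivWithinAt_nonneg hF
    (sub_mem_posTangentConeAt_of_segment_subset (hQ.segment_subset ha hu))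

/-- The Bregman divergence of a `σ`-strongly convex function dominates `σ / 2 * ‖x - y‖ ^ 2`. -/
theorem StrongConvexOn.le_bregman
    {E : Type*} [NormedAddCommGroup E] [NormedSpace ℝ E] {Q : Set E}
    {ψ : E → ℝ} {ψ' : E → E →L[ℝ] ℝ} {σ : ℝ} (hψ : StrongConvexOn Q σ ψ) {x y : E}
    (hdiff : HasFDerivWithinAt ψ (ψ' y) Q y) (hx : x ∈ Q) (hy : y ∈ Q) :
    σ / 2 * ‖x - y‖ ^ 2 ≤ bregman ψ ψ' x y := by
  set c : ℝ := σ / 2 * ‖x - y‖ ^ 2 with hc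
  have hline : HasDerivWithinAt (fun t : ℝ => y + t • (x - y)) (x - y) (Set.Icc 0 1) 0 := by
    simpa using (((hasDerivAt_id (0 : ℝ)).smul_const (x - y)).const_add y).hasDerivWithinAt
  have hmaps : Set.MapsTo (fun t : ℝ => y + t • (x - y)) (Set.Icc 0 1) Q :=
    fun t ht => hψ.1.add_smul_sub_mem hy hx ht
  have hcomp : HasDerivWithinAt (fun t : ℝ => ψ (y + t • (x - y))) (ψ' y (x - y))
      (Set.Icc 0 1) 0 := by
    refine HasFDerivWithinAt.comp_hasDerivWithinAt (t := Q) 0 ?_ hline hmaps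
    simpa using hdiff
  have hpoly : HasDerivAt (fun t : ℝ => (1 - t) * ψ y + t * ψ x - t * (1 - t) * c)
      (ψ x - ψ y - c) 0 := by
    have hid := hasDerivAt_id' (0 : ℝ)
    have hsub := hid.const_sub 1
    exact (((hsub.mul_const (ψ y)).add (hid.mul_const (ψ x))).sub
      ((hid.mul hsub).mul_const c)).congr_deriv (by ring)
  have hmin : IsMinOn (fun t : ℝ => (1 - t) * ψ y + t * ψ x - t * (1 - t) * c
      - ψ (y + t • (x - y))) (Set.Icc 0 1) 0 := by
    intro t ht
    have h := hψ.2 hy hx (sub_nonneg.2 ht.2) ht.1 (by ring)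
    have hpt : (1 - t) • y + t • x = y + t • (x - y) := by module
    rw [hpt, norm_sub_rev] at h
    simp only [smul_eq_mul, ← hc] at h
    simp only [Set.mem_ofPred_eq, zero_smul, add_zero]
    linarith
  have h := hmin.hasFDerivWithinAt_sub_nonneg (convex_Icc 0 1)
    (hpoly.hasDerivWithinAt.sub hcomp).hasFDerivWithinAt
    (Set.left_mem_Icc.2 zero_le_one) (Set.right_mem_Icc.2 zero_le_one)
  simp only [sub_zero, ContinuousLinearMap.toSpanSingleton_apply, one_smul] at h
  unfold bregman
  linarith

/-- One-step inequality for mirror descent. -/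
theorem mirror_step_le
    {E : Type*} [NormedAddCommGroup E] [NormedSpace ℝ E] {Q : Set E}
    {ψ : E → ℝ} {ψ' : E → E →L[ℝ] ℝ} {σ : ℝ} (hσ : 0 < σ)
    (hdiff : ∀ x ∈ Q, HasFDerivWithinAt ψ (ψ' x) Q x) (hψ : StrongConvexOn Q σ ψ)
    {γ : ℝ} (hγ : 0 < γ) {g : E →L[ℝ] ℝ} {x x' u : E} (hx : x ∈ Q) (hx' : x' ∈ Q) (hu : u ∈ Q)
    (hmin : IsMinOn (fun z => g z + (1 / γ) * bregman ψ ψ' z x) Q x') :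
    g (x - u) ≤ 1 / γ * (bregman ψ ψ' u x - bregman ψ ψ' u x') + γ / (2 * σ) * ‖g‖ ^ 2 := by
  have hder : HasFDerivWithinAt (fun z => g z + (1 / γ) * bregman ψ ψ' z x)
      (g + (1 / γ) • (ψ' x' - ψ' x)) Q x' := by
    have hlin : HasFDerivWithinAt (fun z => ψ' x (z - x)) (ψ' x) Q x' := by
      simpa using (((ψ' x).hasFDerivAt (x := x')).sub_const (ψ' x x)).hasFDerivWithinAt
    exact g.hasFDerivWithinAt.add ((((hdiff x' hx').sub_const (ψ x)).sub hlin).const_mul (1 / γ))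
  have hopt := hmin.hasFDerivWithinAt_sub_nonneg hψ.1 hder hx' hu
  have hlow := hψ.le_bregman (hdiff x hx) hx' hx
  have hthree : (ψ' x' - ψ' x) (u - x')
      = bregman ψ ψ' u x - bregman ψ ψ' u x' - bregman ψ ψ' x' x := by
    simp only [bregman, sub_apply, map_sub]
    ring
  simp only [add_apply, smul_apply, smul_eq_mul,
    hthree] at hopt
  have hsplit : g (x - u) = g (x - x') - g (u - x') := by
    simp only [map_sub]
    ring
  have hnorm : g (x - x') ≤ ‖g‖ * ‖x' - x‖ := by
    rw [norm_sub_rev]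
    exact (le_abs_self _).trans (g.le_opNorm _)
  have hyoung : ‖g‖ * ‖x' - x‖ ≤ γ / (2 * σ) * ‖g‖ ^ 2 + 1 / γ * (σ / 2 * ‖x' - x‖ ^ 2) := by
    have hsq : γ / (2 * σ) * ‖g‖ ^ 2 + 1 / γ * (σ / 2 * ‖x' - x‖ ^ 2) - ‖g‖ * ‖x' - x‖
        = (γ * ‖g‖ - σ * ‖x' - x‖) ^ 2 / (2 * σ * γ) := by
      field_simp
      ring
    have : 0 ≤ (γ * ‖g‖ - σ * ‖x' - x‖) ^ 2 / (2 * σ * γ) := by positivity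
    linarith
  have hscaled := mul_le_mul_of_nonneg_left hlow (one_div_pos.2 hγ).le
  linarith

/-- Abel-type bound for a telescoping sum with nonnegative nondecreasing weights. -/
theorem sum_Icc_mul_sub_succ_le {a V : ℕ → ℝ} {R : ℝ} {N : ℕ} (hN : 1 ≤ N)
    (ha : ∀ k, 1 ≤ k → k ≤ N → 0 ≤ a k) (hmono : ∀ k, 1 ≤ k → k + 1 ≤ N → a k ≤ a (k + 1))
    (hVR : ∀ k, 1 ≤ k → k ≤ N → V k ≤ R) :
    ∑ k ∈ Finset.Icc 1 N, a k * (V k - V (k + 1)) ≤ a N * (R - V (N + 1)) := by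
  induction N, hN using Nat.le_induction with
  | base =>
    simp only [Finset.Icc_self, Finset.sum_singleton]
    exact mul_le_mul_of_nonneg_left (by linarith [hVR 1 le_rfl le_rfl]) (ha 1 le_rfl le_rfl)
  | succ n hn ih =>
    rw [Finset.sum_Icc_succ_top (by omega)]
    have hsum := ih (fun k h1 h2 => ha k h1 (by omega)) (fun k h1 h2 => hmono k h1 (by omega))
      (fun k h1 h2 => hVR k h1 (by omega))
    have hstep := mul_le_mul_of_nonneg_right (hmono n hn le_rfl)
      (sub_nonneg.2 (hVR (n + 1) (by omega) le_rfl))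
    linarith

/-- **Weighted telescoping bound.** For the mirror descent iterates with positive non-increasing
step sizes `γ_k`, weights `ω_k = γ_k^{−m}` (if `−1 ≤ m ≤ 0`) or `k^{m/2}` (if `m > 0`), and
`V_ψ(x*, x) ≤ R` on `Q`:
`∑_{k=1}^N ω_k (f(x^k) − f(x*)) ≤ R ω_N/γ_N + ∑_{k=1}^N (ω_k γ_k/(2σ)) ‖∇f(x^k)‖_*²`. -/
theorem weighted_telescoping_bound
    {E : Type*} [NormedAddCommGroup E] [NormedSpace ℝ E] [FiniteDimensional ℝ E]
    (Q : Set E) (hQcomp : IsCompact Q) (hQconv : Convex ℝ Q)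
    (ψ : E → ℝ) (ψ' : E → E →L[ℝ] ℝ) (σ : ℝ) (hσ : 0 < σ)
    (hψdiff : ∀ x ∈ Q, HasFDerivWithinAt ψ (ψ' x) Q x)
    (hψstrong : StrongConvexOn Q σ ψ)
    (f : E → ℝ) (hfconv : ConvexOn ℝ Q f) (hfcont : ContinuousOn f Q)
    (xstar : E) (hxstarQ : xstar ∈ Q) (hxstar : IsMinOn f Q xstar)
    (R : ℝ) (hbound : ∀ x ∈ Q, bregman ψ ψ' xstar x ≤ R)
    (N : ℕ) (hN : 1 ≤ N) (m : ℝ) (hm : -1 ≤ m)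
    (γ ω : ℕ → ℝ)
    (hγpos : ∀ k, 1 ≤ k → k ≤ N → 0 < γ k)
    (hγmono : ∀ k, 2 ≤ k → k ≤ N → γ k ≤ γ (k - 1))
    (hω : ∀ k, ω k = if m ≤ 0 then γ k ^ (-m) else (k : ℝ) ^ (m / 2))
    (x : ℕ → E) (gf : ℕ → E →L[ℝ] ℝ)
    (hx1 : x 1 ∈ Q)
    (hsub : ∀ k, 1 ≤ k → k ≤ N → IsSubgradientAt f Q (gf k) (x k))
    (hstep : ∀ k, 1 ≤ k → k ≤ N → x (k + 1) ∈ Q ∧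
      IsMinOn (fun z => gf k z + (1 / γ k) * bregman ψ ψ' z (x k)) Q (x (k + 1))) :
    ∑ k ∈ Finset.Icc 1 N, ω k * (f (x k) - f xstar) ≤
      R * ω N / γ N + ∑ k ∈ Finset.Icc 1 N, ω k * γ k / (2 * σ) * ‖gf k‖ ^ 2 := by
  have hxQ : ∀ k, 1 ≤ k → k ≤ N + 1 → x k ∈ Q := by
    intro k h1 h2
    obtain rfl | hk := h1.eq_or_lt
    · exact hx1
    · obtain ⟨j, rfl⟩ : ∃ j, k = j + 1 := ⟨k - 1, by omega⟩
      exact (hstep j (by omega) (by omega)).1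
  have hωnonneg : ∀ k, 1 ≤ k → k ≤ N → 0 ≤ ω k := by
    intro k h1 h2
    have := hγpos k h1 h2
    rw [hω k]
    split_ifs <;> positivity
  have hmono : ∀ k, 1 ≤ k → k + 1 ≤ N → ω k / γ k ≤ ω (k + 1) / γ (k + 1) := by
    intro k h1 h2
    have hk := hγpos k h1 (by omega)
    have hk' := hγpos (k + 1) (by omega) h2
    have hle : γ (k + 1) ≤ γ k := hγmono (k + 1) (by omega) h2
    rw [hω k, hω (k + 1)]
    split_ifs with h
    · rw [← Real.rpow_sub_one hk.ne', ← Real.rpow_sub_one hk'.ne']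
      exact Real.rpow_le_rpow_of_nonpos hk' hle (by linarith)
    · have : (k : ℝ) ^ (m / 2) ≤ ((k + 1 : ℕ) : ℝ) ^ (m / 2) :=
        Real.rpow_le_rpow (by positivity) (by exact_mod_cast k.le_succ) (by linarith)
      gcongr
  have hterm : ∀ k ∈ Finset.Icc 1 N, ω k * (f (x k) - f xstar) ≤
      ω k / γ k * (bregman ψ ψ' xstar (x k) - bregman ψ ψ' xstar (x (k + 1)))
        + ω k * γ k / (2 * σ) * ‖gf k‖ ^ 2 := by
    intro k hk
    obtain ⟨h1, h2⟩ := Finset.mem_Icc.1 hk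
    obtain ⟨hnext, hmin⟩ := hstep k h1 h2
    have hdescent := mirror_step_le hσ hψdiff hψstrong (hγpos k h1 h2)
      (hxQ k h1 (by omega)) hnext hxstarQ hmin
    have hgrad := hsub k h1 h2 xstar hxstarQ
    rw [← neg_sub (x k), map_neg] at hgrad
    refine (mul_le_mul_of_nonneg_left (le_trans ?_ hdescent) (hωnonneg k h1 h2)).trans_eq ?_
    · linarith
    · ring
  have hlast : 0 ≤ bregman ψ ψ' xstar (x (N + 1)) := by
    have hQ := hxQ (N + 1) (by omega) le_rfl
    exact le_trans (by positivity) (hψstrong.le_bregman (hψdiff _ hQ) hxstarQ hQ)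
  have hweight : ∀ k, 1 ≤ k → k ≤ N → 0 ≤ ω k / γ k :=
    fun k h1 h2 => div_nonneg (hωnonneg k h1 h2) (hγpos k h1 h2).le
  have htel := sum_Icc_mul_sub_succ_le (a := fun k => ω k / γ k)
    (V := fun k => bregman ψ ψ' xstar (x k)) hN hweight hmono
    (fun k h1 h2 => hbound _ (hxQ k h1 (by omega)))
  have hdrop := mul_nonneg (hweight N hN le_rfl) hlast
  have hR : R * ω N / γ N = ω N / γ N * R := by ring
  have hsum := Finset.sum_le_sum hterm
  rw [Finset.sum_add_distrib] at hsum
  linarith
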